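/- arXiv:1512.07544 — 5 statements merged into one kernel-verified Lean document; each statement's English description precedes it below -/
import Mathlib

section
/- Let γ be a real symplectic matrix of size 2g, written in g×g blocks as γ = (a b; c d), and let Ω ∈ ℌ_g. Then the complex matrix cΩ + d is invertible and (aΩ + b)(cΩ + d)⁻¹ again lies in ℌ_g (here the real matrices a, b, c, d are regarded as complex matrices). -/
/-!
Write `P = aΩ + b` and `Q = cΩ + d`. The block relations contained in `γᵀ J γ = J` give, using
`Ωᵀ = Ω`, the two identities `Pᵀ Q = Qᵀ P` and `Qᴴ P - Pᴴ Q = Ω - Ωᴴ = 2i · Im Ω`.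

If `Q v = 0`, the second identity yields `v* (Im Ω) v = 0`, hence `v = 0` because a positive
definite real matrix stays positive definite over `ℂ` (`posDef_map_ofReal_iff`). So `Q` is
invertible. The first identity then says that `P Q⁻¹` is symmetric, and the second that
`Im (P Q⁻¹) = (Q⁻¹)ᴴ (Im Ω) Q⁻¹`, which is positive definite, being congruent to `Im Ω`.
-/

open Matrix

/-- The Siegel upper half space of genus `g`. -/
def SiegelUpperHalfSpace (g : ℕ) : Set (Matrix (Fin g) (Fin g) ℂ) :=
  {Ω | Ωᵀ = Ω ∧ (Ω.map Complex.im).PosDef}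

open scoped ComplexOrder in
/-- Positive definiteness of a real matrix is insensitive to extending scalars to `ℂ`: for
`x = u + iv` and symmetric `Y`, one has `x* Y x = uᵀ Y u + vᵀ Y v`. -/
theorem posDef_map_ofReal_iff {n : Type*} [Fintype n] (Y : Matrix n n ℝ) :
    (Y.map Complex.ofReal).PosDef ↔ Y.PosDef := by
  have herm : (Y.map Complex.ofReal).IsHermitian ↔ Y.IsHermitian := by
    simp only [Matrix.IsHermitian, ← Matrix.ext_iff]; simp
  rw [posDef_iff_dotProduct_mulVec, posDef_iff_dotProduct_mulVec, herm]
  refine and_congr_right fun hY => ⟨fun h x hx => ?_, fun h x hx => ?_⟩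
  · have := @h (fun i => (x i : ℂ)) (fun h0 => hx (funext fun i => by simpa using congrFun h0 i))
    have e : star (fun i => (x i : ℂ)) ⬝ᵥ (Y.map Complex.ofReal *ᵥ fun i => (x i : ℂ)) =
        ((star x ⬝ᵥ (Y *ᵥ x) : ℝ) : ℂ) := by
      simp [dotProduct, mulVec]
    rw [e] at this
    exact_mod_cast this
  · set u : n → ℝ := fun i => (x i).re
    set v : n → ℝ := fun i => (x i).im
    have sw : u ⬝ᵥ (Y *ᵥ v) = v ⬝ᵥ (Y *ᵥ u) := by
      rw [dotProduct_mulVec, dotProduct_comm, ← mulVec_transpose]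
      rw [show Yᵀ = Y by simpa [Matrix.IsHermitian] using hY]
    have e : star x ⬝ᵥ (Y.map Complex.ofReal *ᵥ x) =
        ((u ⬝ᵥ (Y *ᵥ u) + v ⬝ᵥ (Y *ᵥ v) : ℝ) : ℂ) := by
      apply Complex.ext
      · simp [dotProduct, mulVec, u, v, Complex.re_sum, Complex.im_sum, Finset.sum_add_distrib]
      · have := sub_eq_zero.2 sw
        simp only [dotProduct, mulVec, u, v] at this
        simp [dotProduct, mulVec, Complex.re_sum, Complex.im_sum, Finset.sum_add_distrib]
        linarith
    rw [e]
    have nn : ∀ w : n → ℝ, 0 ≤ w ⬝ᵥ (Y *ᵥ w) := fun w => by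
      by_cases hw : w = 0
      · simp [hw]
      · exact (by simpa using @h w hw : _ < _).le
    have : u ≠ 0 ∨ v ≠ 0 := by
      by_contra! hc
      exact hx (funext fun i => Complex.ext (congrFun hc.1 i) (congrFun hc.2 i))
    have key : 0 < u ⬝ᵥ (Y *ᵥ u) + v ⬝ᵥ (Y *ᵥ v) := by
      rcases this with hu | hv
      · exact add_pos_of_pos_of_nonneg (by simpa using @h u hu) (nn v)
      · exact add_pos_of_nonneg_of_pos (nn u) (by simpa using @h v hv)
    exact_mod_cast key

theorem sub_conjTranspose_of_symm {n : Type*} {Ω : Matrix n n ℂ} (h : Ωᵀ = Ω) :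
    Ω - Ωᴴ = (2 * Complex.I) • (Ω.map Complex.im).map Complex.ofReal := by
  ext i j
  have : Ω j i = Ω i j := congrFun (congrFun h i) j
  simp only [Matrix.sub_apply, conjTranspose_apply, this, Matrix.smul_apply, map_apply, smul_eq_mul]
  apply Complex.ext <;> simp
  ring

open scoped ComplexOrder in
/-- For a real symplectic matrix `γ = (a b; c d)` of size `2g` (in `g × g` blocks) and
`Ω ∈ ℌ_g`, the matrix `cΩ + d` is invertible and `(aΩ + b)(cΩ + d)⁻¹ ∈ ℌ_g`. -/
theorem symplectic_moebius_mem_siegel (g : ℕ) (a b c d : Matrix (Fin g) (Fin g) ℝ)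
    (hγ : (fromBlocks a b c d)ᵀ *
        fromBlocks (0 : Matrix (Fin g) (Fin g) ℝ) 1 (-1) 0 * fromBlocks a b c d =
        fromBlocks (0 : Matrix (Fin g) (Fin g) ℝ) 1 (-1) 0)
    (Ω : Matrix (Fin g) (Fin g) ℂ) (hΩ : Ω ∈ SiegelUpperHalfSpace g) :
    IsUnit (c.map (Complex.ofReal) * Ω + d.map (Complex.ofReal)) ∧
      (a.map (Complex.ofReal) * Ω + b.map (Complex.ofReal)) *
        (c.map (Complex.ofReal) * Ω + d.map (Complex.ofReal))⁻¹ ∈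
          SiegelUpperHalfSpace g := by
  obtain ⟨hsymm, hpos⟩ := hΩ
  rw [← posDef_map_ofReal_iff] at hpos
  have hsub := sub_conjTranspose_of_symm hsymm
  have hblocks : (fromBlocks (a.map Complex.ofReal) (b.map Complex.ofReal)
        (c.map Complex.ofReal) (d.map Complex.ofReal))ᵀ *
      fromBlocks (0 : Matrix (Fin g) (Fin g) ℂ) 1 (-1) 0 *
      fromBlocks (a.map Complex.ofReal) (b.map Complex.ofReal)
        (c.map Complex.ofReal) (d.map Complex.ofReal) =
      fromBlocks (0 : Matrix (Fin g) (Fin g) ℂ) 1 (-1) 0 := by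
    have h := congrArg (fun M => M.map Complex.ofRealHom) hγ
    have hneg : (-1 : Matrix (Fin g) (Fin g) ℝ).map Complex.ofRealHom = -1 := by
      rw [Matrix.map_neg _ (map_neg _), Matrix.map_one _ (map_zero _) (map_one _)]
    simp only [fromBlocks_transpose, Matrix.map_mul, fromBlocks_map, transpose_map,
      Matrix.map_zero _ (map_zero _), Matrix.map_one _ (map_zero _) (map_one _), hneg] at h
    rw [fromBlocks_transpose]
    exact h
  -- The blocks are real, so their adjoints are their transposes.
  have hreal : ∀ m : Matrix (Fin g) (Fin g) ℝ,
      (m.map Complex.ofReal)ᴴ = (m.map Complex.ofReal)ᵀ := fun m => by ext; simp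
  have hA := hreal a
  have hB := hreal b
  have hC := hreal c
  have hD := hreal d
  generalize a.map Complex.ofReal = A at *
  generalize b.map Complex.ofReal = B at *
  generalize c.map Complex.ofReal = C at *
  generalize d.map Complex.ofReal = D at *
  simp only [fromBlocks_transpose, fromBlocks_multiply, fromBlocks_inj, Matrix.mul_zero,
    Matrix.mul_one, Matrix.mul_neg, zero_add, add_zero, Matrix.neg_mul] at hblocks
  obtain ⟨h1, h2, h3, h4⟩ := hblocks
  set P := A * Ω + B with hP
  set Q := C * Ω + D with hQ
  -- The symplectic relations say that the columns of `(P; Q)` pair under `J` as those of `(Ω; 1)`.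
  have hPQ : Pᵀ * Q - Qᵀ * P = 0 := by
    have : Pᵀ * Q - Qᵀ * P = Ω * (-(Cᵀ * A) + Aᵀ * C) * Ω + Ω * (-(Cᵀ * B) + Aᵀ * D)
        + (-(Dᵀ * A) + Bᵀ * C) * Ω + (-(Dᵀ * B) + Bᵀ * D) := by
      simp only [hP, hQ, transpose_add, transpose_mul, hsymm]
      noncomm_ring
    rw [this, h1, h2, h3, h4]; simp
  have hPQ' : Qᴴ * P - Pᴴ * Q = Ω - Ωᴴ := by
    have : Qᴴ * P - Pᴴ * Q = -(Ωᴴ * (-(Cᵀ * A) + Aᵀ * C) * Ω + Ωᴴ * (-(Cᵀ * B) + Aᵀ * D)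
        + (-(Dᵀ * A) + Bᵀ * C) * Ω + (-(Dᵀ * B) + Bᵀ * D)) := by
      simp only [hP, hQ, conjTranspose_add, conjTranspose_mul, hA, hB, hC, hD]
      noncomm_ring
    rw [this, h1, h2, h3, h4]; simp; abel
  have h2I : (2 * Complex.I) ≠ 0 := by simp
  have hunit : IsUnit Q := by
    rw [← mulVec_injective_iff_isUnit]
    refine (injective_iff_map_eq_zero Q.mulVecLin).2 fun v hv => ?_
    rw [mulVecLin_apply] at hv
    by_contra hne
    have hp := hpos.dotProduct_mulVec_pos hne
    -- `Q v = 0` kills both terms of `v* (Q* P - P* Q) v`.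
    have hz : star v ⬝ᵥ ((Qᴴ * P - Pᴴ * Q) *ᵥ v) = 0 := by
      rw [sub_mulVec, ← mulVec_mulVec, ← mulVec_mulVec, hv, mulVec_zero, sub_zero,
        dotProduct_mulVec, ← star_mulVec, hv]
      simp
    rw [hPQ', hsub, smul_mulVec, dotProduct_smul, smul_eq_mul] at hz
    exact hp.ne' ((mul_eq_zero.1 hz).resolve_left h2I)
  have hdet : IsUnit Q.det := (isUnit_iff_isUnit_det Q).1 hunit
  have hQl : Q * Q⁻¹ = 1 := mul_nonsing_inv Q hdet
  have hQt : (Q⁻¹)ᵀ * Qᵀ = 1 := by rw [← transpose_mul, hQl, transpose_one]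
  have hQh : (Q⁻¹)ᴴ * Qᴴ = 1 := by rw [← conjTranspose_mul, hQl, conjTranspose_one]
  have hMsymm : (P * Q⁻¹)ᵀ = P * Q⁻¹ := by
    calc (P * Q⁻¹)ᵀ = (Q⁻¹)ᵀ * (Pᵀ * Q) * Q⁻¹ := by
          rw [transpose_mul, Matrix.mul_assoc, Matrix.mul_assoc, hQl, Matrix.mul_one]
      _ = ((Q⁻¹)ᵀ * Qᵀ) * (P * Q⁻¹) := by
          rw [sub_eq_zero.1 hPQ]; simp only [Matrix.mul_assoc]
      _ = P * Q⁻¹ := by rw [hQt, Matrix.one_mul]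
  refine ⟨hunit, hMsymm, ?_⟩
  have him : ((P * Q⁻¹).map Complex.im).map Complex.ofReal =
      (Q⁻¹)ᴴ * (Ω.map Complex.im).map Complex.ofReal * Q⁻¹ := by
    apply smul_right_injective _ h2I
    show (2 * Complex.I) • _ = (2 * Complex.I) • _
    rw [← sub_conjTranspose_of_symm hMsymm, ← Matrix.smul_mul, ← Matrix.mul_smul, ← hsub, ← hPQ']
    calc P * Q⁻¹ - (P * Q⁻¹)ᴴ
        = ((Q⁻¹)ᴴ * Qᴴ) * (P * Q⁻¹) - (Q⁻¹)ᴴ * Pᴴ * (Q * Q⁻¹) := by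
          rw [hQh, hQl, Matrix.one_mul, Matrix.mul_one, conjTranspose_mul]
      _ = (Q⁻¹)ᴴ * (Qᴴ * P - Pᴴ * Q) * Q⁻¹ := by noncomm_ring
  rw [← posDef_map_ofReal_iff, him]
  exact hpos.conjTranspose_mul_mul_same
    (mulVec_injective_iff_isUnit.2 ((isUnit_nonsing_inv_iff).2 hunit))
end

section
/- The formula γ · Ω = (aΩ + b)(cΩ + d)⁻¹ defines an action of Sp(2g, ℝ) on ℌ_g: for all γ₁, γ₂ ∈ Sp(2g, ℝ) with block decompositions γᵢ = (aᵢ bᵢ; cᵢ dᵢ), and all Ω ∈ ℌ_g, one has (γ₁γ₂) · Ω = γ₁ · (γ₂ · Ω), and the identity matrix acts as the identity. -/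
/-!
Both claims are formal once the denominator `cΩ + d` is known to be invertible for symplectic
`(a b; c d)` and `Ω ∈ ℌ_g`. Put `P = aΩ + b` and `Q = cΩ + d`. The symplectic relations give
`Pᴴ Q - Qᴴ P = Ωᴴ - Ω = -2i Im Ω`, so a vector `v` killed by `Q` satisfies `v* (Im Ω) v = 0`
and vanishes by positivity (`isUnit_denom`).

For `γ₂ · Ω = P Q⁻¹`, the numerator and denominator of `γ₁ · (P Q⁻¹)` are those of
`(γ₁γ₂) · Ω` multiplied on the right by `Q⁻¹`. This factor cancels, and since matrix inversion
reverses products even for singular matrices, only the invertibility of `Q` is needed.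
-/

open Matrix

/-- The matrix `J = (0 I; -I 0)` over `ℝ`. -/
def Jmat (g : ℕ) : Matrix (Fin g ⊕ Fin g) (Fin g ⊕ Fin g) ℝ :=
  fromBlocks 0 1 (-1) 0

/-- The action of a `2g × 2g` real matrix `γ = (a b; c d)` on `g × g` complex matrices,
`γ • Ω = (aΩ + b)(cΩ + d)⁻¹`. -/
noncomputable def siegelAct {g : ℕ} (γ : Matrix (Fin g ⊕ Fin g) (Fin g ⊕ Fin g) ℝ)
    (Ω : Matrix (Fin g) (Fin g) ℂ) : Matrix (Fin g) (Fin g) ℂ :=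
  (γ.toBlocks₁₁.map (Complex.ofReal) * Ω + γ.toBlocks₁₂.map (Complex.ofReal)) *
    (γ.toBlocks₂₁.map (Complex.ofReal) * Ω + γ.toBlocks₂₂.map (Complex.ofReal))⁻¹

lemma symplectic_blocks {g : ℕ} {a b c d : Matrix (Fin g) (Fin g) ℝ}
    (h : (fromBlocks a b c d)ᵀ * Jmat g * fromBlocks a b c d = Jmat g) :
    aᵀ * c = cᵀ * a ∧ bᵀ * d = dᵀ * b ∧ aᵀ * d - cᵀ * b = 1 ∧ bᵀ * c - dᵀ * a = -1 := by
  simp only [Jmat, fromBlocks_transpose, fromBlocks_multiply, fromBlocks_inj] at h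
  obtain ⟨h1, h2, h3, h4⟩ := h
  simp only [mul_zero, mul_neg, mul_one, zero_add, add_zero, neg_mul] at h1 h2 h3 h4
  refine ⟨?_, ?_, ?_, ?_⟩
  · rw [← sub_eq_zero, ← h1]; abel
  · rw [← sub_eq_zero, ← h4]; abel
  · rw [← h2]; abel
  · rw [← h3]; abel

/-- A real positive definite matrix has no nonzero complex isotropic vector: for `v = x + iy` the
real part of `v* Y v` is `xᵀ Y x + yᵀ Y y`. -/
lemma eq_zero_of_complex_form_eq_zero {g : ℕ} {Y : Matrix (Fin g) (Fin g) ℝ} (hY : Y.PosDef)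
    {v : Fin g → ℂ} (hv : star v ⬝ᵥ (Y.map Complex.ofReal *ᵥ v) = 0) : v = 0 := by
  have hre : (star v ⬝ᵥ (Y.map Complex.ofReal *ᵥ v)).re =
      (fun i => (v i).re) ⬝ᵥ (Y *ᵥ fun i => (v i).re) +
        (fun i => (v i).im) ⬝ᵥ (Y *ᵥ fun i => (v i).im) := by
    simp only [dotProduct, mulVec, Complex.re_sum, Complex.im_sum, Matrix.map_apply,
      Pi.star_apply, Complex.mul_re, Complex.mul_im, RCLike.star_def, Complex.conj_re,
      Complex.conj_im, Complex.ofReal_re, Complex.ofReal_im, zero_mul, sub_zero, add_zero,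
      neg_mul, sub_neg_eq_add, Finset.sum_add_distrib]
  rw [hv, Complex.zero_re] at hre
  have hn (x : Fin g → ℝ) : 0 ≤ x ⬝ᵥ (Y *ᵥ x) := by
    simpa using hY.posSemidef.dotProduct_mulVec_nonneg x
  have hz {x : Fin g → ℝ} (hx : x ⬝ᵥ (Y *ᵥ x) = 0) : x = 0 := by
    by_contra hne
    have := hY.dotProduct_mulVec_pos hne
    simp only [star_trivial] at this
    exact this.ne' hx
  have hx := hn fun i => (v i).re
  have hy := hn fun i => (v i).im
  have hx0 := hz (x := fun i => (v i).re) (by linarith)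
  have hy0 := hz (x := fun i => (v i).im) (by linarith)
  funext i
  exact Complex.ext (congrFun hx0 i) (congrFun hy0 i)

lemma isUnit_denom {g : ℕ} {a b c d : Matrix (Fin g) (Fin g) ℝ}
    (h : (fromBlocks a b c d)ᵀ * Jmat g * fromBlocks a b c d = Jmat g)
    {Ω : Matrix (Fin g) (Fin g) ℂ} (hΩ : Ω ∈ SiegelUpperHalfSpace g) :
    IsUnit (c.map Complex.ofReal * Ω + d.map Complex.ofReal).det := by
  obtain ⟨h1, h2, h3, h4⟩ := symplectic_blocks h
  rw [isUnit_iff_ne_zero]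
  intro hdet
  obtain ⟨v, hv0, hv⟩ := exists_mulVec_eq_zero_iff.2 hdet
  refine hv0 (eq_zero_of_complex_form_eq_zero hΩ.2 ?_)
  -- The symplectic relations, transported to complex matrices.
  have hmul (A B : Matrix (Fin g) (Fin g) ℝ) :
      (A * B).map Complex.ofReal = A.map Complex.ofReal * B.map Complex.ofReal :=
    Matrix.map_mul (f := Complex.ofRealHom)
  have hstar (A : Matrix (Fin g) (Fin g) ℝ) :
      (A.map Complex.ofReal)ᴴ = Aᵀ.map Complex.ofReal := by
    ext i j; simp
  have k1 := congrArg (fun M => M.map Complex.ofReal) h1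
  have k2 := congrArg (fun M => M.map Complex.ofReal) h2
  have k3 : (aᵀ * d).map Complex.ofReal - (cᵀ * b).map Complex.ofReal = 1 := by
    rw [← Matrix.map_sub _ Complex.ofReal_sub, h3]
    exact Matrix.map_one _ Complex.ofReal_zero Complex.ofReal_one
  have k4 : (bᵀ * c).map Complex.ofReal - (dᵀ * a).map Complex.ofReal = -1 := by
    rw [← Matrix.map_sub _ Complex.ofReal_sub, h4]
    ext i j
    by_cases hij : i = j <;> simp [hij]
  simp only [hmul, ← hstar] at k1 k2 k3 k4
  have hY : (2 * Complex.I) • (Ω.map Complex.im).map Complex.ofReal = Ω - Ωᴴ := by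
    ext i j
    have hs : Ω j i = Ω i j := congrFun (congrFun hΩ.1 i) j
    simp only [Matrix.smul_apply, Matrix.map_apply, Matrix.sub_apply, conjTranspose_apply, hs,
      smul_eq_mul]
    apply Complex.ext <;> (simp; try ring)
  generalize a.map Complex.ofReal = A at *
  generalize b.map Complex.ofReal = B at *
  generalize c.map Complex.ofReal = C at *
  generalize d.map Complex.ofReal = D at *
  have key : (C * Ω + D)ᴴ * (A * Ω + B) - (A * Ω + B)ᴴ * (C * Ω + D) = Ω - Ωᴴ := by
    simp only [conjTranspose_add, conjTranspose_mul]
    calc _ = -(Ωᴴ * (Aᴴ * C - Cᴴ * A) * Ω) - Ωᴴ * (Aᴴ * D - Cᴴ * B)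
            - (Bᴴ * C - Dᴴ * A) * Ω - (Bᴴ * D - Dᴴ * B) := by noncomm_ring
      _ = _ := by rw [k1, k2, k3, k4]; noncomm_ring
  have h0 : (2 * Complex.I) • (star v ⬝ᵥ ((Ω.map Complex.im).map Complex.ofReal *ᵥ v)) = 0 := by
    rw [← dotProduct_smul, ← smul_mulVec, hY, ← key, sub_mulVec, ← mulVec_mulVec,
      ← mulVec_mulVec, hv, mulVec_zero, sub_zero, dotProduct_mulVec, ← star_mulVec, hv,
      star_zero, zero_dotProduct]
  simpa using h0

/-- The formula `γ • Ω = (aΩ + b)(cΩ + d)⁻¹` defines an action of `Sp(2g, ℝ)` on `ℌ_g`: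
it is compatible with products, and the identity matrix acts as the identity. -/
theorem siegelAct_is_action (g : ℕ)
    (γ₁ γ₂ : Matrix (Fin g ⊕ Fin g) (Fin g ⊕ Fin g) ℝ)
    (hγ₁ : γ₁ᵀ * Jmat g * γ₁ = Jmat g) (hγ₂ : γ₂ᵀ * Jmat g * γ₂ = Jmat g)
    (Ω : Matrix (Fin g) (Fin g) ℂ) (hΩ : Ω ∈ SiegelUpperHalfSpace g) :
    siegelAct (γ₁ * γ₂) Ω = siegelAct γ₁ (siegelAct γ₂ Ω) ∧
      siegelAct (1 : Matrix (Fin g ⊕ Fin g) (Fin g ⊕ Fin g) ℝ) Ω = Ω := by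
  obtain ⟨a, b, c, d, rfl⟩ : ∃ a b c d, γ₁ = fromBlocks a b c d :=
    ⟨_, _, _, _, (fromBlocks_toBlocks γ₁).symm⟩
  obtain ⟨a', b', c', d', rfl⟩ : ∃ a b c d, γ₂ = fromBlocks a b c d :=
    ⟨_, _, _, _, (fromBlocks_toBlocks γ₂).symm⟩
  constructor
  · have hQ := isUnit_denom hγ₂ hΩ
    have hmul (A B : Matrix (Fin g) (Fin g) ℝ) :
        (A * B).map Complex.ofReal = A.map Complex.ofReal * B.map Complex.ofReal :=
      Matrix.map_mul (f := Complex.ofRealHom)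
    simp only [siegelAct, fromBlocks_multiply, toBlocks_fromBlocks₁₁, toBlocks_fromBlocks₁₂,
      toBlocks_fromBlocks₂₁, toBlocks_fromBlocks₂₂, Matrix.map_add _ Complex.ofReal_add, hmul]
    set P := a'.map Complex.ofReal * Ω + b'.map Complex.ofReal with hP
    set Q := c'.map Complex.ofReal * Ω + d'.map Complex.ofReal with hQdef
    have e (x y : Matrix (Fin g) (Fin g) ℂ) : x * (P * Q⁻¹) + y = (x * P + y * Q) * Q⁻¹ := by
      rw [add_mul (x * P), mul_assoc x, mul_assoc y, mul_nonsing_inv _ hQ, mul_one]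
    have e' (x y : Matrix (Fin g) (Fin g) ℂ) :
        (x * a'.map Complex.ofReal + y * c'.map Complex.ofReal) * Ω +
          (x * b'.map Complex.ofReal + y * d'.map Complex.ofReal) = x * P + y * Q := by
      rw [hP, hQdef]; noncomm_ring
    rw [e, e, e', e', Matrix.mul_inv_rev, nonsing_inv_nonsing_inv _ hQ, mul_assoc, ← mul_assoc Q⁻¹,
      nonsing_inv_mul _ hQ, one_mul]
  · rw [← fromBlocks_one]
    simp only [siegelAct, toBlocks_fromBlocks₁₁, toBlocks_fromBlocks₁₂, toBlocks_fromBlocks₂₁,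
      toBlocks_fromBlocks₂₂]
    simp [Matrix.map_one _ Complex.ofReal_zero Complex.ofReal_one,
      Matrix.map_zero _ Complex.ofReal_zero]
end

section
/- The action of Sp(2g, ℝ) on ℌ_g by γ · Ω = (aΩ + b)(cΩ + d)⁻¹ is transitive: for every Ω ∈ ℌ_g there exists γ = (a b; c d) ∈ Sp(2g, ℝ) such that c(iI_g) + d is invertible and (a(iI_g) + b)(c(iI_g) + d)⁻¹ = Ω, where iI_g is i times the g×g identity matrix. -/
/-!
Write `Ω = X + iY` with `X` real symmetric and `Y` real positive definite, and factor `Y = BᵀB` with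
`B` invertible. The symplectic matrix `(Bᵀ, X B⁻¹; 0, B⁻¹)`, the product of the translation by `X`
with the block-diagonal matrix `diag(Bᵀ, B⁻¹)`, sends `iI` to `(iBᵀ + X B⁻¹) B = X + iY`.
-/

open Matrix

/-- A real positive definite matrix is `BᵀB` for some invertible `B`. -/
lemma exists_transpose_mul_self_of_posDef {g : ℕ} {Y : Matrix (Fin g) (Fin g) ℝ}
    (hY : Y.PosDef) : ∃ B : Matrix (Fin g) (Fin g) ℝ, IsUnit B.det ∧ Y = Bᵀ * B := by
  open scoped MatrixOrder in
  obtain ⟨B, hB⟩ := CStarAlgebra.nonneg_iff_eq_star_mul_self.mp hY.posSemidef.nonneg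
  rw [star_eq_conjTranspose, conjTranspose_eq_transpose_of_trivial] at hB
  refine ⟨B, ?_, hB⟩
  have h := (isUnit_iff_isUnit_det _).mp hY.isUnit
  rw [hB, det_mul] at h
  exact isUnit_of_mul_isUnit_right h

/-- The action of `Sp(2g, ℝ)` on `ℌ_g` is transitive: every `Ω ∈ ℌ_g` is of the form
`(a·(iI) + b)(c·(iI) + d)⁻¹` for some real symplectic matrix `(a b; c d)`. -/
theorem siegel_action_transitive (g : ℕ) (Ω : Matrix (Fin g) (Fin g) ℂ)
    (hΩ : Ω ∈ SiegelUpperHalfSpace g) :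
    ∃ a b c d : Matrix (Fin g) (Fin g) ℝ,
      (fromBlocks a b c d)ᵀ *
          fromBlocks (0 : Matrix (Fin g) (Fin g) ℝ) 1 (-1) 0 * fromBlocks a b c d =
          fromBlocks (0 : Matrix (Fin g) (Fin g) ℝ) 1 (-1) 0 ∧
        IsUnit (c.map (Complex.ofReal) * (Complex.I • (1 : Matrix (Fin g) (Fin g) ℂ)) +
          d.map (Complex.ofReal)) ∧
        (a.map (Complex.ofReal) * (Complex.I • (1 : Matrix (Fin g) (Fin g) ℂ)) +
            b.map (Complex.ofReal)) *
          (c.map (Complex.ofReal) * (Complex.I • (1 : Matrix (Fin g) (Fin g) ℂ)) +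
            d.map (Complex.ofReal))⁻¹ = Ω := by
  obtain ⟨hsymm, hpos⟩ := hΩ
  obtain ⟨B, hdet, hB⟩ := exists_transpose_mul_self_of_posDef hpos
  set X : Matrix (Fin g) (Fin g) ℝ := Ω.map Complex.re with hX
  have hXsymm : Xᵀ = X := by rw [hX, ← transpose_map, hsymm]
  have hΩ_eq : Ω = X.map Complex.ofReal + Complex.I • (Bᵀ * B).map Complex.ofReal := by
    rw [← hB]
    ext i j
    simp [hX, mul_comm Complex.I, Complex.re_add_im]
  have hBinv : B * B⁻¹ = 1 := mul_nonsing_inv B hdet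
  have hBinv' : B⁻¹ * B = 1 := nonsing_inv_mul B hdet
  have map_mul_ofReal : ∀ M N : Matrix (Fin g) (Fin g) ℝ,
      (M * N).map Complex.ofReal = M.map Complex.ofReal * N.map Complex.ofReal :=
    fun M N => Matrix.map_mul (f := Complex.ofRealHom)
  have map_one_ofReal : (1 : Matrix (Fin g) (Fin g) ℝ).map Complex.ofReal = 1 :=
    Matrix.map_one _ Complex.ofReal_zero Complex.ofReal_one
  have hright : B⁻¹.map Complex.ofReal * B.map Complex.ofReal = 1 := by
    rw [← map_mul_ofReal, hBinv', map_one_ofReal]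
  have hdenom : (0 : Matrix (Fin g) (Fin g) ℝ).map Complex.ofReal *
      (Complex.I • (1 : Matrix (Fin g) (Fin g) ℂ)) + B⁻¹.map Complex.ofReal =
        B⁻¹.map Complex.ofReal := by
    rw [Matrix.map_zero _ Complex.ofReal_zero, zero_mul, zero_add]
  refine ⟨Bᵀ, X * B⁻¹, 0, B⁻¹, ?_, ?_, ?_⟩
  · have hBinv_transpose : B⁻¹ᵀ * Bᵀ = 1 := by
      rw [← transpose_mul, hBinv, transpose_one]
    simp [fromBlocks_transpose, fromBlocks_multiply, hBinv, hBinv_transpose, hXsymm,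
      Matrix.mul_assoc]
  · rw [hdenom]
    exact IsUnit.of_mul_eq_one _ hright
  · rw [hdenom, inv_eq_right_inv hright, hΩ_eq, map_mul_ofReal, map_mul_ofReal, Matrix.add_mul,
      Matrix.mul_assoc (X.map _), hright, Matrix.mul_one, Matrix.mul_smul, Matrix.mul_one,
      Matrix.smul_mul, add_comm]
end

section
/- (Serre's lemma / Minkowski) Let n ≥ 1 and N ≥ 3 be integers and let A be an n×n integer matrix with A ≡ I (mod N), i.e. every entry of A − I is divisible by N. If A has finite order, i.e. A^k = I for some integer k ≥ 1, then A = I. -/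
/-!
Passing to a power of `A`, which is still congruent to `1` mod `N`, reduces the claim to the case
`A ^ p = 1` with `p` prime. Suppose `A ≠ 1` and write `A = 1 + d E`, where `d` is the gcd of the
entries of `A - 1`, so that `N ∣ d` and the entries of `E` have gcd `1`. Expanding
`(1 + d E) ^ p = 1` and dividing by `d` gives
`p E + d (p choose 2) E² + d² F = 0` for an integer matrix `F`. Hence `d` divides `p E`, so `d ∣ p`
by primitivity of `E`. As `|d| ≥ N ≥ 3` this forces `d = ± p` and `p` odd. Then `p` divides
`p choose 2`, so the last two terms are divisible by `p²` and `p` divides `E`, contradicting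
primitivity.
-/

open Matrix

/-- The binomial expansion of `(1 + x) ^ m` to second order, with remainder a multiple of `x ^ 3`. -/
lemma exists_one_add_pow_eq {R : Type*} [Ring R] (x : R) (m : ℕ) :
    ∃ r : R, (1 + x) ^ m = 1 + (m : R) * x + (m.choose 2 : R) * x ^ 2 + x ^ 3 * r := by
  have key : ∃ r : Polynomial ℤ, (1 + Polynomial.X) ^ m
      = 1 + (m : Polynomial ℤ) * Polynomial.X
        + (m.choose 2 : Polynomial ℤ) * Polynomial.X ^ 2 + Polynomial.X ^ 3 * r := by
    induction m with
    | zero => exact ⟨0, by simp⟩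
    | succ m ih =>
      obtain ⟨r, hr⟩ := ih
      refine ⟨r * (1 + Polynomial.X) + (m.choose 2 : Polynomial ℤ), ?_⟩
      rw [pow_succ, hr, Nat.choose_succ_succ' m 1, Nat.choose_one_right]
      push_cast
      ring
  obtain ⟨r, hr⟩ := key
  refine ⟨Polynomial.aeval x r, ?_⟩
  simpa using congrArg (Polynomial.aeval x) hr

lemma eq_one_of_pow_prime_eq_one {n N p : ℕ} (hN : 3 ≤ N) (hp : p.Prime)
    (A : Matrix (Fin n) (Fin n) ℤ) (hcong : ∀ i j, (N : ℤ) ∣ (A - 1) i j) (hA : A ^ p = 1) :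
    A = 1 := by
  by_contra hne
  have hex : ∃ i j, (A - 1) i j ≠ 0 := by
    by_contra! h
    exact hne (sub_eq_zero.mp (by ext i j; exact h i j))
  obtain ⟨i₀, j₀, h₀⟩ := hex
  obtain ⟨g, hg, hg1⟩ := Finset.extract_gcd (s := Finset.univ)
    (fun b : Fin n × Fin n => (A - 1) b.1 b.2) ⟨(i₀, j₀), Finset.mem_univ _⟩
  have hNd : (N : ℤ) ∣ Finset.univ.gcd (fun b : Fin n × Fin n => (A - 1) b.1 b.2) :=
    Finset.dvd_gcd fun b _ => hcong b.1 b.2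
  generalize Finset.univ.gcd (fun b : Fin n × Fin n => (A - 1) b.1 b.2) = d at hg hNd
  have hd : d ≠ 0 := by
    rintro rfl
    exact h₀ (by simpa using hg (i₀, j₀) (Finset.mem_univ _))
  let E : Matrix (Fin n) (Fin n) ℤ := Matrix.of fun i j => g (i, j)
  have hAE : A = 1 + d • E := by
    rw [← sub_eq_iff_eq_add']
    ext i j
    simpa [E] using hg (i, j) (Finset.mem_univ _)
  -- Primitivity of `E`, in the form in which it is used twice below.
  have hprim : ∀ a c : ℤ, (∀ i j, a ∣ c * E i j) → a ∣ c := by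
    intro a c h
    have := Finset.dvd_gcd (s := Finset.univ) (f := fun b => c * g b) (a := a)
      fun b _ => h b.1 b.2
    rw [Finset.gcd_mul_left, hg1, mul_one] at this
    exact (dvd_normalize_iff).mp this
  obtain ⟨r, hr⟩ := exists_one_add_pow_eq (d • E) p
  rw [← hAE, hA] at hr
  have hexp : ∃ F : Matrix (Fin n) (Fin n) ℤ, ∀ i j,
      (p : ℤ) * E i j = -(d * (p.choose 2) * (E ^ 2) i j + d ^ 2 * F i j) := by
    refine ⟨E ^ 3 * r, fun i j => mul_left_cancel₀ hd ?_⟩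
    have h := congrFun (congrFun hr i) j
    simp only [← nsmul_eq_mul, smul_pow, Matrix.smul_mul, Matrix.add_apply, Matrix.smul_apply,
      smul_eq_mul] at h
    simp only [nsmul_eq_mul] at h
    linear_combination -h
  obtain ⟨F, hF⟩ := hexp
  have hdp : d ∣ p := hprim d p fun i j =>
    ⟨-((p.choose 2) * (E ^ 2) i j + d * F i j), by rw [hF]; ring⟩
  have hdabs : d.natAbs = p := by
    rcases (Nat.dvd_prime hp).mp (Int.natAbs_dvd_natAbs.mpr hdp) with h | h
    · have := Nat.le_of_dvd (by omega) (Int.natCast_dvd.mp hNd)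
      omega
    · exact h
  have hp3 : 2 < p := by
    have := Nat.le_of_dvd (by omega) (Int.natCast_dvd.mp hNd)
    omega
  obtain ⟨c, hc⟩ : p ∣ p.choose 2 := hp.dvd_choose_self two_ne_zero hp3
  obtain ⟨u, hu⟩ : (p : ℤ) ∣ d := by rw [Int.natCast_dvd, hdabs]
  have hp1 : (p : ℤ) ∣ 1 := hprim p 1 fun i j => by
    refine ⟨-(u * c * (E ^ 2) i j + u ^ 2 * F i j), ?_⟩
    have hp0 : (p : ℤ) ≠ 0 := by exact_mod_cast hp.ne_zero
    refine mul_left_cancel₀ hp0 ?_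
    rw [one_mul, hF, hc, hu]
    push_cast
    ring
  exact hp.one_lt.ne' (by exact_mod_cast Int.eq_one_of_dvd_one (by positivity) hp1)

/-- (Serre's lemma / Minkowski) If `n ≥ 1`, `N ≥ 3`, and `A` is an `n × n` integer matrix
with `A ≡ I (mod N)` which has finite order, then `A = I`. -/
theorem serre_lemma (n N : ℕ) (hn : 1 ≤ n) (hN : 3 ≤ N)
    (A : Matrix (Fin n) (Fin n) ℤ)
    (hcong : ∀ i j, (N : ℤ) ∣ (A - 1) i j)
    (k : ℕ) (hk : 1 ≤ k) (hA : A ^ k = 1) :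
    A = 1 := by
  induction k using Nat.recOnMul generalizing A with
  | zero => omega
  | one => simpa using hA
  | prime p hp => exact eq_one_of_pow_prime_eq_one hN hp A hcong hA
  | mul a b iha ihb =>
    have ha : 1 ≤ a := Nat.pos_of_ne_zero (by rintro rfl; simp at hk)
    have hb : 1 ≤ b := Nat.pos_of_ne_zero (by rintro rfl; simp at hk)
    refine iha A hcong ha (ihb (A ^ a) (fun i j => ?_) hb (by rw [← pow_mul, hA]))
    -- `A ^ a - 1` is a multiple of `A - 1`, hence also divisible by `N`.
    rw [← mul_geom_sum, Matrix.mul_apply]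
    exact Finset.dvd_sum fun l _ => (hcong i l).mul_right _
end

section
/- For every integer N ≥ 1, the reduction-mod-N map Sp(2g, ℤ) → Sp(2g, ℤ/Nℤ) is surjective: for every 2g×2g matrix ḡ over ℤ/Nℤ with ḡᵀ J ḡ = J, there exists γ ∈ Sp(2g, ℤ) whose entrywise reduction modulo N equals ḡ. -/
/-!
The proof works with the submonoid of matrices over `ℤ/Nℤ` that lift to `Sp(2g, ℤ)` and writes an
arbitrary symplectic matrix `M = (A B; C D)` as a product of its members.

* Unipotent matrices `(1 X; 0 1)` and `(1 0; X 1)` with `X` symmetric lift: lift the entries of `X`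
  symmetrically.
* `ℤ/Nℤ` is Artinian, and there is a diagonal `X` such that `A + X C` is invertible
  (`exists_isUnit_add_diagonal_mul`). Over a field this holds because, as long as `A + X C` has a
  nonzero kernel vector `v`, adding a suitable diagonal matrix unit to `X` strictly shrinks the
  kernel; the choices at the finitely many residue fields are glued by the Chinese remainder
  theorem.
* Once the upper left block is invertible, block elimination by symmetric unipotents leaves
  `diag(U, U⁻ᵀ)` with `U ∈ GL_g(ℤ/Nℤ)`. The Smith normal form of an integer lift of `U` gives
  `U = P · diag(d) · Q` with `P, Q` reductions of matrices in `GL_g(ℤ)`, so that `diag(P, P⁻ᵀ)` and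
  `diag(Q, Q⁻ᵀ)` visibly lift. Finally `diag(D, D⁻¹)`, for `D` diagonal, is a product of symmetric
  unipotents and `J`.
-/

open Matrix

namespace SpReduction

variable {n : Type*} [Fintype n] [DecidableEq n]

/-! ### Making the upper left block invertible -/

/-- If `A + X C` kills `v ≠ 0`, then `w = C v` is nonzero and, by symmetry of `(A + X C)ᵀ C`, the
range of `A + X C` is orthogonal to `w`. Adding the diagonal matrix unit at an index `i` with
`w i ≠ 0` to `X` removes `v` from the kernel and adds nothing to it, because `e i` is not in the
range of `A + X C`. -/
lemma exists_isUnit_add_diagonal_mul_of_field {k : Type*} [Field k] {A C : Matrix n n k}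
    (hker : ∀ x : n → k, A *ᵥ x = 0 → C *ᵥ x = 0 → x = 0) (hsymm : Aᵀ * C = Cᵀ * A) :
    ∃ x : n → k, IsUnit (A + diagonal x * C) := by
  obtain ⟨x, -, hx⟩ := WellFounded.has_min
    (InvImage.wf (fun x : n → k => LinearMap.ker (A + diagonal x * C).mulVecLin)
      (wellFounded_lt (α := Submodule k (n → k)))) Set.univ ⟨0, trivial⟩
  refine ⟨x, ?_⟩
  rw [← mulVec_injective_iff_isUnit, ← coe_mulVecLin, ← LinearMap.ker_eq_bot,
    ker_mulVecLin_eq_bot_iff]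
  intro v hv
  by_contra hv0
  set A' := A + diagonal x * C with hA'
  have hs : A'ᵀ * C = Cᵀ * A' := by
    simp only [hA', transpose_add, transpose_mul, diagonal_transpose, add_mul, mul_add, hsymm,
      Matrix.mul_assoc]
  have hw : C *ᵥ v ≠ 0 := by
    intro h
    refine hv0 (hker v ?_ h)
    simpa [hA', add_mulVec, ← mulVec_mulVec, h] using hv
  obtain ⟨i, hi⟩ := Function.ne_iff.mp hw
  have horth : ∀ u, (A' *ᵥ u) ⬝ᵥ (C *ᵥ v) = 0 := by
    intro u
    rw [dotProduct_mulVec, ← mulVec_transpose, mulVec_mulVec, ← hs, ← mulVec_mulVec,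
      mulVec_transpose, ← dotProduct_mulVec, hv, dotProduct_zero]
  have hstep : A + diagonal (x + Pi.single i 1) * C = A' + diagonal (Pi.single i 1) * C := by
    rw [hA', add_assoc, ← add_mul, diagonal_add]
    rfl
  have hmul : ∀ u, (A + diagonal (x + Pi.single i 1) * C) *ᵥ u
      = A' *ᵥ u + Pi.single i ((C *ᵥ u) i) := by
    intro u
    rw [hstep, add_mulVec, ← mulVec_mulVec]
    congr 1
    ext j
    by_cases h : j = i
    · subst h; simp [mulVec_diagonal]
    · simp [mulVec_diagonal, h]
  refine hx (x + Pi.single i 1) trivial ?_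
  refine lt_of_le_of_ne ?_ ?_
  · intro u hu
    simp only [LinearMap.mem_ker, mulVecLin_apply] at hu ⊢
    rw [hmul] at hu
    have h1 : (C *ᵥ u) i = 0 := by
      have := congrArg (· ⬝ᵥ (C *ᵥ v)) hu
      simp only [add_dotProduct, horth, zero_add, single_dotProduct, zero_dotProduct] at this
      exact (mul_eq_zero.mp this).resolve_right hi
    simpa [h1] using hu
  · intro h
    have h1 : v ∈ LinearMap.ker (A + diagonal x * C).mulVecLin := hv
    change LinearMap.ker (A + diagonal (x + Pi.single i 1) * C).mulVecLin
      = LinearMap.ker (A + diagonal x * C).mulVecLin at h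
    rw [← h, LinearMap.mem_ker, mulVecLin_apply, hmul, hv, zero_add, Pi.single_eq_zero_iff] at h1
    exact hi h1

/-- The field case at every residue field, glued by the Chinese remainder theorem. -/
lemma exists_isUnit_add_diagonal_mul {R : Type*} [CommRing R] [IsArtinianRing R]
    {A B C D : Matrix n n R} (hM : fromBlocks A B C D ∈ symplecticGroup n R) :
    ∃ x : n → R, IsUnit (A + diagonal x * C) := by
  have key : ∀ m : MaximalSpectrum R, ∃ y : n → R ⧸ m.asIdeal,
      IsUnit (A.map (Ideal.Quotient.mk m.asIdeal)
        + diagonal y * C.map (Ideal.Quotient.mk m.asIdeal)) := by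
    intro m
    let : Field (R ⧸ m.asIdeal) := Ideal.Quotient.field _
    have hM' := SymplecticGroup.map_mem hM (Ideal.Quotient.mk m.asIdeal)
    rw [fromBlocks_map] at hM'
    obtain ⟨h1, -, -⟩ := SymplecticGroup.fromBlocks_mem_iff.mp hM'
    refine exists_isUnit_add_diagonal_mul_of_field (fun v hA hC => ?_) h1
    have hu := (isUnit_iff_isUnit_det _).mpr (SymplecticGroup.symplectic_det hM')
    have := mulVec_injective_iff_isUnit.mpr hu (a₁ := Sum.elim v 0) (a₂ := Sum.elim 0 0)
      (by simp [fromBlocks_mulVec, hA, hC])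
    exact (Sum.elim_eq_iff.1 this).1
  choose y hy using key
  have hcop : Pairwise (Function.onFun IsCoprime
      (fun m : MaximalSpectrum R => m.asIdeal)) := fun m m' h =>
    Ideal.isCoprime_of_isMaximal (fun h' => h (MaximalSpectrum.ext h'))
  choose x hx using fun i : n => Ideal.pi_quotient_surjective hcop (fun m => y m i)
  refine ⟨x, (isUnit_iff_isUnit_det _).mpr ?_⟩
  by_contra hdet
  obtain ⟨I, hI, hmem⟩ := exists_max_ideal_of_mem_nonunits hdet
  have hy' := (isUnit_iff_isUnit_det _).mp (hy ⟨I, hI⟩)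
  have hmap : (A + diagonal x * C).map (Ideal.Quotient.mk I)
      = A.map (Ideal.Quotient.mk I) + diagonal (y ⟨I, hI⟩) * C.map (Ideal.Quotient.mk I) := by
    have hd : (diagonal x).map (Ideal.Quotient.mk I) = diagonal (y ⟨I, hI⟩) := by
      rw [diagonal_map (map_zero _)]
      congr 1
      ext i
      exact hx i ⟨I, hI⟩
    rw [Matrix.map_add _ (map_add _), Matrix.map_mul, hd]
  rw [← hmap, ← RingHom.mapMatrix_apply, ← RingHom.map_det,
    Ideal.Quotient.eq_zero_iff_mem.mpr hmem] at hy'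
  have : Nontrivial (R ⧸ I) := Ideal.Quotient.nontrivial_iff.mpr hI.ne_top
  exact not_isUnit_zero hy'

/-! ### Smith normal form -/

/-- Smith normal form of a nonsingular integer matrix, without the divisibility chain. -/
lemma exists_smith (U : Matrix n n ℤ) (hU : U.det ≠ 0) :
    ∃ (P Q : Matrix n n ℤ) (d : n → ℤ), IsUnit P ∧ IsUnit Q ∧ U = P * diagonal d * Q := by
  have hinj : Function.Injective (toLin' U) :=
    mulVec_injective_of_det_ne_zero hU
  let e := LinearEquiv.ofInjective (toLin' U) hinj
  obtain ⟨b, a, c, hc⟩ := Submodule.exists_smith_normal_form_of_rank_eq (Pi.basisFun ℤ n)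
    (N := LinearMap.range (toLin' U)) e.finrank_eq.symm
  let s := c.map e.symm
  let P := (Pi.basisFun ℤ n).toMatrix b
  let S := (Pi.basisFun ℤ n).toMatrix s
  have hP : IsUnit P := by
    let := (Pi.basisFun ℤ n).invertibleToMatrix b
    exact isUnit_of_invertible P
  have hS : IsUnit S := by
    let := (Pi.basisFun ℤ n).invertibleToMatrix s
    exact isUnit_of_invertible S
  have hUS : U * S = P * diagonal a := by
    ext i j
    have h1 : toLin' U (s j) = a j • b j := by
      rw [← hc j]
      exact congrArg Subtype.val (e.apply_symm_apply (c j))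
    have h2 := congrFun h1 i
    rw [mul_diagonal]
    simp only [toLin'_apply, mulVec, dotProduct, Pi.smul_apply, smul_eq_mul] at h2
    simp only [mul_apply, S, P, Module.Basis.toMatrix_apply, Pi.basisFun_repr]
    rw [h2, mul_comm]
  refine ⟨P, S⁻¹, a, hP, isUnit_nonsing_inv_iff.mpr hS, ?_⟩
  rw [← hUS, mul_nonsing_inv_cancel_right _ _ ((isUnit_iff_isUnit_det _).mp hS)]

/-! ### Matrices that lift -/

variable (n) in
/-- The matrices over `ℤ/Nℤ` that are reductions of integral symplectic matrices. -/
def liftable (N : ℕ) : Submonoid (Matrix (n ⊕ n) (n ⊕ n) (ZMod N)) :=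
  (symplecticGroup n ℤ).map (Int.castRingHom (ZMod N)).mapMatrix

variable {N : ℕ}

lemma fromBlocks_mem_liftable {A B C D : Matrix n n ℤ}
    (h : fromBlocks A B C D ∈ symplecticGroup n ℤ) :
    fromBlocks (A.map (Int.cast : ℤ → ZMod N)) (B.map Int.cast) (C.map Int.cast)
      (D.map Int.cast) ∈ liftable n N :=
  ⟨_, h, by simp [fromBlocks_map]⟩

lemma exists_symm_lift {m : Type*} {X : Matrix m m (ZMod N)} (hX : X.IsSymm) :
    ∃ Y : Matrix m m ℤ, Y.IsSymm ∧ Y.map (Int.cast : ℤ → ZMod N) = X := by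
  choose s hs using ZMod.intCast_surjective (n := N)
  exact ⟨X.map s, hX.map s, Matrix.ext fun i j => hs (X i j)⟩

lemma upper_mem {X : Matrix n n (ZMod N)} (hX : X.IsSymm) :
    fromBlocks 1 X 0 1 ∈ liftable n N := by
  obtain ⟨Y, hY, rfl⟩ := exists_symm_lift hX
  simpa using fromBlocks_mem_liftable (N := N) (A := 1) (B := Y) (C := 0) (D := 1)
    (SymplecticGroup.fromBlocks_mem_iff.mpr (by simp [hY.eq]))

lemma lower_mem {X : Matrix n n (ZMod N)} (hX : X.IsSymm) :
    fromBlocks 1 0 X 1 ∈ liftable n N := by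
  obtain ⟨Y, hY, rfl⟩ := exists_symm_lift hX
  simpa using fromBlocks_mem_liftable (N := N) (A := 1) (B := 0) (C := Y) (D := 1)
    (SymplecticGroup.fromBlocks_mem_iff.mpr (by simp [hY.eq]))

lemma J_mem : J n (ZMod N) ∈ liftable n N :=
  ⟨J n ℤ, SymplecticGroup.J_mem n ℤ, map_J n (Int.castRingHom (ZMod N))⟩

/-- `diag(D, D⁻¹)` lifts for symmetric `D`, even if `D` has no invertible integral lift: it is a
product of `J` and three unipotents, each of which lifts. -/
lemma symmetric_levi_mem {D E : Matrix n n (ZMod N)} (hD : D.IsSymm) (hE : E.IsSymm)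
    (hDE : D * E = 1) : fromBlocks D 0 0 E ∈ liftable n N := by
  have hED : E * D = 1 := mul_eq_one_comm.mp hDE
  have h : fromBlocks D 0 0 E
      = fromBlocks 1 D 0 1 * fromBlocks 1 0 (-E) 1 * fromBlocks 1 D 0 1 * J n (ZMod N) := by
    simp [J, fromBlocks_multiply, hDE, hED]
  rw [h]
  exact mul_mem (mul_mem (mul_mem (upper_mem hD) (lower_mem hE.neg)) (upper_mem hD)) J_mem

lemma integral_levi_mem {P : Matrix n n ℤ} (hP : IsUnit P) :
    fromBlocks (P.map (Int.cast : ℤ → ZMod N)) 0 0 ((P⁻¹)ᵀ.map (Int.cast : ℤ → ZMod N))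
      ∈ liftable n N := by
  have hdet := (isUnit_iff_isUnit_det _).mp hP
  simpa using fromBlocks_mem_liftable (N := N) (A := P) (B := 0) (C := 0) (D := (P⁻¹)ᵀ)
    (SymplecticGroup.fromBlocks_mem_iff.mpr
      (by simp [← transpose_mul, nonsing_inv_mul _ hdet]))

/-- `diag(U, U⁻ᵀ)` lifts, by the Smith normal form of an integral lift of `U`; that lift has nonzero
determinant because `det U` is a unit and `ℤ/Nℤ` may be assumed nontrivial. -/
lemma levi_mem {U V : Matrix n n (ZMod N)} (hUV : U * Vᵀ = 1) :
    fromBlocks U 0 0 V ∈ liftable n N := by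
  rcases subsingleton_or_nontrivial (ZMod N) with _ | _
  · rw [Subsingleton.elim (fromBlocks U 0 0 V) 1]
    exact one_mem _
  choose s hs using ZMod.intCast_surjective (n := N)
  have hW : (U.map s).map (Int.cast : ℤ → ZMod N) = U := Matrix.ext fun i j => hs (U i j)
  have hdetU : IsUnit U.det := by
    have := congrArg det hUV
    rw [det_mul, det_one] at this
    exact IsUnit.of_mul_eq_one _ this
  have hdet : (U.map s).det ≠ 0 := by
    intro h
    have h1 := RingHom.map_det (Int.castRingHom (ZMod N)) (U.map s)
    rw [h, map_zero, RingHom.mapMatrix_apply] at h1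
    change 0 = ((U.map s).map (Int.cast : ℤ → ZMod N)).det at h1
    rw [hW] at h1
    exact not_isUnit_zero (h1 ▸ hdetU)
  obtain ⟨P, Q, d, hP, hQ, hPQ⟩ := exists_smith _ hdet
  set r := (Int.castRingHom (ZMod N)).mapMatrix (m := n) with hr
  have hU : U = r P * r (diagonal d) * r Q := by
    rw [← map_mul, ← map_mul, ← hPQ]; exact hW.symm
  have hPP : r P * r P⁻¹ = 1 := by
    rw [← map_mul, mul_nonsing_inv _ ((isUnit_iff_isUnit_det _).mp hP), map_one]
  have hQQ : r Q * r Q⁻¹ = 1 := by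
    rw [← map_mul, mul_nonsing_inv _ ((isUnit_iff_isUnit_det _).mp hQ), map_one]
  have hPP' := mul_eq_one_comm.mp hPP
  have hQQ' := mul_eq_one_comm.mp hQQ
  -- The inverse of the reduced diagonal matrix, expressed through `U⁻¹ = Vᵀ`.
  set E := r Q * Vᵀ * r P with hE
  have hDE : r (diagonal d) * E = 1 := by
    have h1 : r (diagonal d) * r Q = r P⁻¹ * U := by
      rw [hU, ← Matrix.mul_assoc, ← Matrix.mul_assoc, hPP', Matrix.one_mul]
    rw [hE, ← Matrix.mul_assoc, ← Matrix.mul_assoc, h1, Matrix.mul_assoc _ U, hUV, Matrix.mul_one,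
      hPP']
  have hDs : (r (diagonal d)).IsSymm := by
    rw [hr, RingHom.mapMatrix_apply]
    exact (isSymm_diagonal d).map _
  have hEs : E.IsSymm := by
    have h1 : Eᵀ * r (diagonal d) = 1 := by
      have := congrArg transpose hDE
      rwa [transpose_mul, hDs.eq, transpose_one] at this
    exact left_inv_eq_right_inv h1 hDE
  have hV : V = (r P⁻¹)ᵀ * E * (r Q⁻¹)ᵀ := by
    have h1 : Vᵀ = r Q⁻¹ * E * r P⁻¹ := by
      rw [hE, Matrix.mul_assoc, Matrix.mul_assoc, hPP, Matrix.mul_one, ← Matrix.mul_assoc, hQQ',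
        Matrix.one_mul]
    rw [← transpose_transpose V, h1, transpose_mul, transpose_mul, hEs.eq,
      Matrix.mul_assoc (r P⁻¹)ᵀ]
  have h : fromBlocks U 0 0 V = fromBlocks (r P) 0 0 (r P⁻¹)ᵀ
      * fromBlocks (r (diagonal d)) 0 0 E * fromBlocks (r Q) 0 0 (r Q⁻¹)ᵀ := by
    simp [fromBlocks_multiply, hU, hV]
  rw [h]
  exact mul_mem (mul_mem (integral_levi_mem hP) (symmetric_levi_mem hDs hEs hDE))
    (integral_levi_mem hQ)

/-- Block elimination `M = (1 0; CA⁻¹ 1) · diag(A, A⁻ᵀ) · (1 A⁻¹B; 0 1)`; the symplectic relations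
make `CA⁻¹` and `A⁻¹B` symmetric. -/
lemma mem_liftable_of_isUnit {A B C D : Matrix n n (ZMod N)}
    (hM : fromBlocks A B C D ∈ symplecticGroup n (ZMod N)) (hA : IsUnit A) :
    fromBlocks A B C D ∈ liftable n N := by
  obtain ⟨h1, h2, h3⟩ := SymplecticGroup.fromBlocks_mem_iff.mp hM
  obtain ⟨u, rfl⟩ := hA
  set A : Matrix n n (ZMod N) := ↑u with hA
  set A' : Matrix n n (ZMod N) := ↑u⁻¹ with hA'
  have hAA' : A * A' = 1 := u.mul_inv
  have hA'A : A' * A = 1 := u.inv_mul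
  have hT : A'ᵀ * Aᵀ = 1 := by rw [← transpose_mul, hAA', transpose_one]
  have hY : (C * A').IsSymm := by
    have : A'ᵀ * (Aᵀ * C) * A' = A'ᵀ * (Cᵀ * A) * A' := by rw [h1]
    rw [← Matrix.mul_assoc, hT, Matrix.one_mul, Matrix.mul_assoc, Matrix.mul_assoc, hAA',
      Matrix.mul_one] at this
    rw [IsSymm, transpose_mul, this]
  -- The Schur complement `D - C A⁻¹ B` equals `A⁻ᵀ`.
  have hD : D = C * A' * B + A'ᵀ := by
    have h4 : A'ᵀ * (Aᵀ * D - Cᵀ * B) = A'ᵀ := by rw [h3, Matrix.mul_one]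
    rw [mul_sub, ← Matrix.mul_assoc, hT, Matrix.one_mul, ← Matrix.mul_assoc, ← transpose_mul,
      hY.eq] at h4
    rw [← h4]; abel
  have hZ : (A' * B).IsSymm := by
    have h5 : Bᵀ * (C * A') * B + Bᵀ * A'ᵀ = Bᵀ * (C * A') * B + A' * B := by
      have h6 := h2
      rw [hD, transpose_add, transpose_mul, hY.eq, transpose_transpose, mul_add, add_mul,
        ← Matrix.mul_assoc] at h6
      exact h6
    rw [IsSymm, transpose_mul]
    exact add_left_cancel h5
  have h : fromBlocks A B C D
      = fromBlocks 1 0 (C * A') 1 * fromBlocks A 0 0 A'ᵀ * fromBlocks 1 (A' * B) 0 1 := by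
    have e1 : A * (A' * B) = B := by rw [← Matrix.mul_assoc, hAA', Matrix.one_mul]
    have e2 : C * A' * A = C := by rw [Matrix.mul_assoc, hA'A, Matrix.mul_one]
    simp only [fromBlocks_multiply, Matrix.one_mul, Matrix.mul_one, Matrix.zero_mul,
      Matrix.mul_zero, add_zero, zero_add, e1, e2]
    rw [hD, ← Matrix.mul_assoc C A' B]
  rw [h]
  exact mul_mem (mul_mem (lower_mem hY) (levi_mem (by rw [transpose_transpose, hAA'])))
    (upper_mem hZ)

lemma mem_liftable [NeZero N] {M : Matrix (n ⊕ n) (n ⊕ n) (ZMod N)}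
    (hM : M ∈ symplecticGroup n (ZMod N)) : M ∈ liftable n N := by
  obtain ⟨A, B, C, D, rfl⟩ : ∃ A B C D, M = fromBlocks A B C D :=
    ⟨_, _, _, _, (fromBlocks_toBlocks M).symm⟩
  obtain ⟨x, hx⟩ := exists_isUnit_add_diagonal_mul hM
  have hprod : fromBlocks 1 (diagonal x) 0 1 * fromBlocks A B C D
      = fromBlocks (A + diagonal x * C) (B + diagonal x * D) C D := by
    simp [fromBlocks_multiply]
  have hsp : fromBlocks (A + diagonal x * C) (B + diagonal x * D) C D
      ∈ symplecticGroup n (ZMod N) := by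
    rw [← hprod]
    exact mul_mem (SymplecticGroup.fromBlocks_mem_iff.mpr (by simp)) hM
  have h : fromBlocks A B C D = fromBlocks 1 (-diagonal x) 0 1
      * fromBlocks (A + diagonal x * C) (B + diagonal x * D) C D := by
    simp only [fromBlocks_multiply, Matrix.one_mul, Matrix.zero_mul, zero_add, Matrix.neg_mul,
      add_neg_cancel_right]
  rw [h]
  exact mul_mem (upper_mem (isSymm_diagonal x).neg) (mem_liftable_of_isUnit hsp hx)

/-- The form `(0 1; -1 0)` is the negative of `Matrix.J`, and has the same isometry group. -/
lemma mem_symplecticGroup_iff {R : Type*} [CommRing R] {M : Matrix (n ⊕ n) (n ⊕ n) R} :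
    M ∈ symplecticGroup n R ↔
      Mᵀ * fromBlocks (0 : Matrix n n R) 1 (-1) 0 * M = fromBlocks (0 : Matrix n n R) 1 (-1) 0 := by
  have hJ : fromBlocks (0 : Matrix n n R) 1 (-1) 0 = -J n R := by simp [J, fromBlocks_neg]
  rw [SymplecticGroup.mem_iff', hJ, Matrix.mul_neg, Matrix.neg_mul, neg_inj]

end SpReduction

/-- For every `N ≥ 1`, the reduction map `Sp(2g, ℤ) → Sp(2g, ℤ/Nℤ)` is surjective: every
symplectic matrix over `ℤ/Nℤ` lifts to a symplectic integer matrix. -/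
theorem sp_reduction_surjective (g N : ℕ) (hN : 1 ≤ N)
    (gbar : Matrix (Fin g ⊕ Fin g) (Fin g ⊕ Fin g) (ZMod N))
    (hgbar : gbarᵀ * fromBlocks (0 : Matrix (Fin g) (Fin g) (ZMod N)) 1 (-1) 0 * gbar =
      fromBlocks (0 : Matrix (Fin g) (Fin g) (ZMod N)) 1 (-1) 0) :
    ∃ γ : Matrix (Fin g ⊕ Fin g) (Fin g ⊕ Fin g) ℤ,
      γᵀ * fromBlocks (0 : Matrix (Fin g) (Fin g) ℤ) 1 (-1) 0 * γ =
          fromBlocks (0 : Matrix (Fin g) (Fin g) ℤ) 1 (-1) 0 ∧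
        γ.map (Int.cast : ℤ → ZMod N) = gbar := by
  have : NeZero N := ⟨by omega⟩
  obtain ⟨γ, hγ, h⟩ := SpReduction.mem_liftable (SpReduction.mem_symplecticGroup_iff.mpr hgbar)
  exact ⟨γ, SpReduction.mem_symplecticGroup_iff.mp hγ, h⟩
end
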